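/- Let k and n be positive integers and λ = (λ₁, λ₂, …, λ_m) a partition of n with n ≥ k + λ₂, and set ℓ = n − λ₁ = |λ̄|. Then the number of Kronecker tableaux of length k, initial shape (n) and final shape λ equals f^{λ̄} · Σ_{m₁=0}^{ℓ} [ C(k, m₁) · Σ_{m₂ = ℓ − m₁}^{⌊(k − m₁)/2⌋} C(m₂, ℓ − m₁) · p₂(k − m₁, m₂) ], where C(a,b) denotes a binomial coefficient. -/

import Mathlib

open Finset

namespace KroneckerPaper

/-- A (removable) corner of a Young diagram: a cell with no cell below it nor to its right
(in English notation; equivalently, in French notation, a cell at the right end of its row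
with no cell above it). -/
def IsCorner (μ : YoungDiagram) (c : ℕ × ℕ) : Prop :=
  c ∈ μ ∧ (c.1 + 1, c.2) ∉ μ ∧ (c.1, c.2 + 1) ∉ μ

/-- The *first corner* of a Young diagram: the unique corner lying on a row of maximal
length. -/
def IsFirstCorner (μ : YoungDiagram) (c : ℕ × ℕ) : Prop :=
  IsCorner μ c ∧ μ.rowLen c.1 = μ.rowLen 0

/-- `μ'` is obtained from `μ` by adding one new cell which is a corner of `μ'`. -/
def AddCorner (μ μ' : YoungDiagram) : Prop :=
  ∃ c, IsCorner μ' c ∧ c ∉ μ.cells ∧ μ'.cells = insert c μ.cells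

/-- `μ'` is obtained from `μ` by removing one corner of `μ`. -/
def RemoveCorner (μ μ' : YoungDiagram) : Prop :=
  ∃ c, IsCorner μ c ∧ μ'.cells = μ.cells.erase c

/-- `μ' ≠ μ` *differs from `μ` by the position of a corner*: it is obtained from `μ` by
removing a corner of `μ` and adding a new cell which is a corner of `μ'`. -/
def MoveCorner (μ μ' : YoungDiagram) : Prop :=
  μ' ≠ μ ∧ ∃ c c', IsCorner μ c ∧ IsCorner μ' c' ∧ c' ∉ μ.cells.erase c ∧
    μ'.cells = insert c' (μ.cells.erase c)

/-- The one-row Young diagram `(n)`. -/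
def rowDiagram (n : ℕ) : YoungDiagram :=
  YoungDiagram.ofRowLens [n] (List.pairwise_singleton _ n).sortedGE

/-- The Young diagram obtained by deleting the first (longest) row, i.e. the truncated
partition `λ̄ = (λ₂, …, λ_m)` of `λ = (λ₁, λ₂, …, λ_m)`. -/
def truncate (μ : YoungDiagram) : YoungDiagram where
  cells := (μ.cells.filter fun c => 1 ≤ c.1).image fun c => (c.1 - 1, c.2)
  isLowerSet := by
    rintro ⟨i1, j1⟩ ⟨i2, j2⟩ ⟨hi, hj⟩ h
    simp only [Finset.coe_image, Finset.coe_filter, Set.mem_image, Set.mem_setOf_eq,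
      Finset.mem_coe, YoungDiagram.mem_cells] at h ⊢
    obtain ⟨⟨a, b⟩, ⟨ha, ha1⟩, heq⟩ := h
    simp only [Prod.mk.injEq] at heq
    exact ⟨(i2 + 1, j2), ⟨μ.up_left_mem (by omega) (by omega) ha, by omega⟩, by simp⟩

/-- A *Kronecker tableau* of length `k`, initial shape `μ` and final shape `lam`:
a sequence `μ⁰ = μ, μ¹, …, μ^k = lam` of diagrams such that each `μ^{i+1}` either differs
from `μ^i` by the position of a corner, or equals `μ^i` together with the datum of a
distinguished corner of `μ^{i+1}` other than its first corner. -/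
structure KroneckerTableau (k : ℕ) (μ lam : YoungDiagram) where
  seq : Fin (k + 1) → YoungDiagram
  dist : Fin k → Option (ℕ × ℕ)
  init : seq 0 = μ
  final : seq (Fin.last k) = lam
  step : ∀ i : Fin k,
    (MoveCorner (seq i.castSucc) (seq i.succ) ∧ dist i = none) ∨
    (seq i.succ = seq i.castSucc ∧
      ∃ c, dist i = some c ∧ IsCorner (seq i.succ) c ∧ ¬ IsFirstCorner (seq i.succ) c)

/-- A *partial standard tableau* of shape `α` with labels in `{1, …, k}`: a labelling of the
cells of `α` by pairwise distinct integers of `{1, …, k}` increasing along rows and columns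
(cells outside `α` are labelled `0` by convention). -/
structure PartialST (α : YoungDiagram) (k : ℕ) where
  label : ℕ × ℕ → ℕ
  mem_of_cell : ∀ c ∈ α, label c ∈ Finset.Icc 1 k
  zero_of_not_cell : ∀ c, c ∉ α → label c = 0
  injOn : ∀ c ∈ α, ∀ c' ∈ α, label c = label c' → c = c'
  row_incr : ∀ i j1 j2 : ℕ, j1 < j2 → (i, j2) ∈ α → label (i, j1) < label (i, j2)
  col_incr : ∀ i1 i2 j : ℕ, i1 < i2 → (i2, j) ∈ α → label (i1, j) < label (i2, j)

/-- `f^α`, the number of standard Young tableaux of shape `α`. -/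
noncomputable def fSYT (α : YoungDiagram) : ℕ :=
  Nat.card (PartialST α α.card)

/-- `p₂ n k`: the number of partitions of an `n`-element set into exactly `k` blocks, each of
size at least `2` (associated Stirling numbers of the second kind). -/
noncomputable def p2 (n k : ℕ) : ℕ :=
  Nat.card {P : Finpartition (Finset.univ : Finset (Fin n)) //
    P.parts.card = k ∧ ∀ b ∈ P.parts, 2 ≤ b.card}

/-- Every non-trivial cycle of `π` is *decreasing*: `π x < x` for every element `x` of a
non-trivial cycle which is not the minimum of its cycle. -/
def DecCycles {S : Type*} [LinearOrder S] (π : Equiv.Perm S) : Prop :=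
  ∀ x, π x ≠ x → (∃ y, π.SameCycle x y ∧ y < x) → π x < x

/-- A pair `(T, π)` of a partial standard tableau of shape `α` with labels in `{1, …, k}`
and a permutation `π` of `{1, …, k}` all of whose non-trivial cycles are decreasing, such
that every fixed point of `π` is a label of `T` and every label of `T` is the greatest
element of its cycle in `π`. -/
structure TabPerm (k : ℕ) (α : YoungDiagram) where
  T : PartialST α k
  π : Equiv.Perm ℕ
  perm_of : ∀ x : ℕ, x ∉ Finset.Icc 1 k → π x = x
  dec : DecCycles π
  fix_mem : ∀ x ∈ Finset.Icc 1 k, π x = x → ∃ c ∈ α, T.label c = x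
  label_max : ∀ c ∈ α, ∀ y : ℕ, π.SameCycle (T.label c) y → y ≤ T.label c

/-!
A step of a Kronecker tableau removes a corner and then adds a corner. Returning to the same
partition is possible in as many ways as it has corners, which is one more than the number of
corners that may be distinguished. Hence, if `U` and `D` sum a function over the diagrams obtained
by adding and by removing a corner, the number `N k` of tableaux of length `k`, as a function of
their final shape, satisfies `N (k + 1) = (D U - 1) N k`.

As long as `n ≥ k + λ₂`, the first row of `λ` is long enough not to constrain the moves, and in
terms of the truncation `λ̄` the recurrence becomes `N (k + 1) = ((D + 1) (U + 1) - 1) N k`.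
Since `D f = f` and `U f α = (|α| + 1) f α` for the number `f` of standard tableaux, the solution
is `f λ̄ * c k |λ̄|` with `c (k + 1) l = c k (l - 1) + l * c k l + (l + 1) * c k (l + 1)`.
This is also the recurrence for the partitions of a `k`-set with `l` marked blocks, all singletons
being marked; it is proved through the generating polynomials `Q k = ∑ l, c k l * X ^ l`, for which
it reads `Q (k + 1) = X * Q k + (X + 1) * derivative (Q k)`.
-/

section Covers

/-- Every element of `P` covers, and is covered by, only finitely many elements, so that one can
sum over covers. -/
class FiniteCovers (P : Type*) [Preorder P] : Prop where
  finite_lowerCovers : ∀ a : P, {b | b ⋖ a}.Finite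
  finite_upperCovers : ∀ a : P, {b | a ⋖ b}.Finite

section Preorder

variable {P : Type*} [Preorder P] [FiniteCovers P] {a b : P}

/-- The elements covered by `a`; for diagrams, those obtained by removing a corner. -/
noncomputable def lowerCovers (a : P) : Finset P :=
  (FiniteCovers.finite_lowerCovers a).toFinset

/-- The elements covering `a`; for diagrams, those obtained by adding a corner. -/
noncomputable def upperCovers (a : P) : Finset P :=
  (FiniteCovers.finite_upperCovers a).toFinset

@[simp]
theorem mem_lowerCovers : b ∈ lowerCovers a ↔ b ⋖ a :=
  Set.Finite.mem_toFinset _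

@[simp]
theorem mem_upperCovers : b ∈ upperCovers a ↔ a ⋖ b :=
  Set.Finite.mem_toFinset _

open Classical in
/-- The elements `b ≠ a` such that `a` and `b` cover a common element; for diagrams, those which
differ from `a` by the position of a corner. -/
noncomputable def neighbors (a : P) : Finset P :=
  (lowerCovers a).biUnion fun c => (upperCovers c).erase a

theorem mem_neighbors : b ∈ neighbors a ↔ b ≠ a ∧ ∃ c, c ⋖ a ∧ c ⋖ b := by
  simp only [neighbors, mem_biUnion, mem_lowerCovers, mem_erase, mem_upperCovers]
  tauto

end Preorder

section Lattice

theorem sum_lowerCovers_upperCovers {P M : Type*} [SemilatticeInf P] [FiniteCovers P]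
    [AddCommMonoid M] (F : P → M) (a : P) :
    ∑ c ∈ lowerCovers a, ∑ b ∈ upperCovers c, F b =
      #(lowerCovers a) • F a + ∑ b ∈ neighbors a, F b := by
  classical
  have disjoint : (lowerCovers a : Set P).PairwiseDisjoint fun c => (upperCovers c).erase a := by
    refine fun c hc c' hc' hne => disjoint_left.2 fun b hb hb' => hne ?_
    simp only [mem_coe, mem_lowerCovers, mem_erase, mem_upperCovers] at hc hc' hb hb'
    rw [← hc.wcovBy.inf_eq hb.2.wcovBy hb.1.symm, hc'.wcovBy.inf_eq hb'.2.wcovBy hb.1.symm]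
  calc ∑ c ∈ lowerCovers a, ∑ b ∈ upperCovers c, F b
      = ∑ c ∈ lowerCovers a, (F a + ∑ b ∈ (upperCovers c).erase a, F b) :=
        sum_congr rfl fun c hc => (add_sum_erase _ _ <| by simpa using hc).symm
    _ = _ := by rw [sum_add_distrib, sum_const, neighbors, sum_biUnion disjoint]

variable {P : Type*} [Lattice P] [IsWeakUpperModularLattice P] [IsWeakLowerModularLattice P]
  [FiniteCovers P]

theorem mem_neighbors_iff_upper {a b : P} : b ∈ neighbors a ↔ b ≠ a ∧ ∃ c, a ⋖ c ∧ b ⋖ c := by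
  rw [mem_neighbors]
  refine and_congr_right fun hne => ⟨?_, ?_⟩
  · rintro ⟨c, hca, hcb⟩
    obtain rfl := hca.wcovBy.inf_eq hcb.wcovBy hne.symm
    exact ⟨a ⊔ b, hca.sup_of_inf_of_inf_left hcb, hca.sup_of_inf_of_inf_right hcb⟩
  · rintro ⟨c, hac, hbc⟩
    obtain rfl := hac.wcovBy.sup_eq hbc.wcovBy hne.symm
    exact ⟨a ⊓ b, hac.inf_of_sup_of_sup_left hbc, hac.inf_of_sup_of_sup_right hbc⟩

theorem sum_upperCovers_lowerCovers {M : Type*} [AddCommMonoid M] (F : P → M) (a : P) :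
    ∑ c ∈ upperCovers a, ∑ b ∈ lowerCovers c, F b =
      #(upperCovers a) • F a + ∑ b ∈ neighbors a, F b := by
  classical
  have disjoint : (upperCovers a : Set P).PairwiseDisjoint fun c => (lowerCovers c).erase a := by
    refine fun c hc c' hc' hne => disjoint_left.2 fun b hb hb' => hne ?_
    simp only [mem_coe, mem_lowerCovers, mem_erase, mem_upperCovers] at hc hc' hb hb'
    rw [← hc.wcovBy.sup_eq hb.2.wcovBy hb.1.symm, hc'.wcovBy.sup_eq hb'.2.wcovBy hb.1.symm]
  have neighbors_eq :
      neighbors a = (upperCovers a).biUnion fun c => (lowerCovers c).erase a := by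
    ext b
    simp only [mem_neighbors_iff_upper, mem_biUnion, mem_upperCovers, mem_erase, mem_lowerCovers]
    tauto
  calc ∑ c ∈ upperCovers a, ∑ b ∈ lowerCovers c, F b
      = ∑ c ∈ upperCovers a, (F a + ∑ b ∈ (lowerCovers c).erase a, F b) :=
        sum_congr rfl fun c hc => (add_sum_erase _ _ <| by simpa using hc).symm
    _ = _ := by rw [sum_add_distrib, sum_const, neighbors_eq, sum_biUnion disjoint]

end Lattice

end Covers

section YoungDiagram

variable {μ ν : YoungDiagram} {c : ℕ × ℕ}

theorem card_eq_zero_iff_eq_bot : μ.card = 0 ↔ μ = ⊥ := by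
  rw [card_eq_zero, YoungDiagram.ext_iff, YoungDiagram.cells_bot]

theorem le_iff_rowLen_le : μ ≤ ν ↔ μ.rowLen ≤ ν.rowLen := by
  refine ⟨fun h i => le_of_forall_lt fun j hj => ?_, fun h ⟨i, j⟩ hc => ?_⟩
  · exact YoungDiagram.mem_iff_lt_rowLen.1 (h (YoungDiagram.mem_iff_lt_rowLen.2 hj))
  · exact YoungDiagram.mem_iff_lt_rowLen.2 ((YoungDiagram.mem_iff_lt_rowLen.1 hc).trans_le (h i))

theorem rowLen_injective : Function.Injective YoungDiagram.rowLen := fun _ _ h =>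
  le_antisymm (le_iff_rowLen_le.2 h.le) (le_iff_rowLen_le.2 h.ge)

theorem exists_rowLen_eq {f : ℕ → ℕ} (hf : Antitone f) {N : ℕ} (hN : f N = 0) :
    ∃ μ : YoungDiagram, μ.rowLen = f := by
  let cells := {c ∈ range N ×ˢ range (f 0) | c.2 < f c.1}
  have mem_cells (i j : ℕ) : (i, j) ∈ cells ↔ j < f i := by
    simp only [cells, mem_filter, mem_product, mem_range, and_iff_right_iff_imp]
    refine fun h => ⟨?_, h.trans_le (hf i.zero_le)⟩
    by_contra! hi
    have := hf hi
    omega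
  refine ⟨⟨cells, fun c d hdc hc => ?_⟩, funext fun i => eq_of_forall_lt_iff fun j => ?_⟩
  · rw [mem_coe, mem_cells] at hc ⊢
    exact hdc.2.trans_lt (hc.trans_le (hf hdc.1))
  · exact YoungDiagram.mem_iff_lt_rowLen.symm.trans (mem_cells i j)

theorem rowLen_colLen_zero (μ : YoungDiagram) : μ.rowLen (μ.colLen 0) = 0 := by
  by_contra h
  exact lt_irrefl _ <|
    YoungDiagram.mem_iff_lt_colLen.1 (YoungDiagram.mem_iff_lt_rowLen.2 (Nat.pos_of_ne_zero h))

theorem isCorner_iff_maximal : IsCorner μ c ↔ Maximal (· ∈ μ) c := by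
  refine and_congr_right fun _ => ⟨fun ⟨hdown, hright⟩ d hd hcd => ?_, fun h => ⟨?_, ?_⟩⟩
  · by_contra hdc
    rcases (Prod.mk_le_mk.1 hcd).1.lt_or_eq with hlt | heq
    · exact hdown (μ.up_left_mem hlt hcd.2 hd)
    · refine hright (μ.up_left_mem heq.le (lt_of_not_ge fun h => hdc ⟨heq.ge, h⟩) hd)
  · intro hd
    simpa using (h hd ⟨Nat.le_succ _, le_rfl⟩).1
  · intro hd
    simpa using (h hd ⟨le_rfl, Nat.le_succ _⟩).2

theorem isCorner_iff_rowLen {i j : ℕ} :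
    IsCorner μ (i, j) ↔ μ.rowLen i = j + 1 ∧ μ.rowLen (i + 1) ≤ j := by
  simp only [IsCorner, YoungDiagram.mem_iff_lt_rowLen]
  omega

theorem exists_isCorner_notMem (h : ν < μ) : ∃ c, IsCorner μ c ∧ c ∉ ν := by
  have nonempty : (μ.cells \ ν.cells).Nonempty :=
    sdiff_nonempty.2 fun hle => h.not_ge (YoungDiagram.cells_subset_iff.1 hle)
  obtain ⟨c, hc, hmax⟩ := exists_maximal nonempty
  simp only [mem_sdiff, YoungDiagram.mem_cells] at hc hmax
  exact ⟨c, isCorner_iff_maximal.2 ⟨hc.1, fun d hd hcd =>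
    hmax ⟨hd, fun hdν => hc.2 (ν.isLowerSet hcd hdν)⟩ hcd⟩, hc.2⟩

theorem exists_cells_eq_erase (hc : IsCorner μ c) :
    ∃ ν : YoungDiagram, ν.cells = μ.cells.erase c := by
  refine ⟨⟨μ.cells.erase c, ?_⟩, rfl⟩
  rw [coe_erase]
  exact μ.isLowerSet.erase fun d hd hcd => (isCorner_iff_maximal.1 hc).eq_of_ge hd hcd

theorem covBy_of_cells_covBy (h : ν.cells ⋖ μ.cells) : ν ⋖ μ :=
  h.of_image ⟨⟨YoungDiagram.cells, fun _ _ => YoungDiagram.ext⟩,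
    YoungDiagram.cells_subset_iff⟩

theorem covBy_iff_removeCorner : ν ⋖ μ ↔ RemoveCorner μ ν := by
  constructor
  · intro h
    obtain ⟨c, hc, hcν⟩ := exists_isCorner_notMem h.lt
    obtain ⟨κ, hκ⟩ := exists_cells_eq_erase hc
    have hκμ : κ < μ := by
      rw [← YoungDiagram.cells_ssubset_iff, hκ]
      exact erase_ssubset hc.1
    have hνκ : ν ≤ κ := by
      rw [← YoungDiagram.cells_subset_iff, hκ]
      exact subset_erase.2 ⟨h.le, hcν⟩
    exact ⟨c, hc, (hνκ.eq_of_not_lt fun hlt => h.2 hlt hκμ) ▸ hκ⟩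
  · rintro ⟨c, hc, hν⟩
    refine covBy_of_cells_covBy ?_
    rw [hν]
    exact erase_covBy hc.1

theorem covBy_iff_addCorner : ν ⋖ μ ↔ AddCorner ν μ := by
  rw [covBy_iff_removeCorner]
  refine exists_congr fun c => and_congr_right fun hc => ⟨fun h => ?_, fun ⟨hcν, h⟩ => ?_⟩
  · rw [h, insert_erase hc.1]
    exact ⟨notMem_erase c _, rfl⟩
  · rw [h, erase_insert hcν]

theorem card_eq_of_covBy (h : ν ⋖ μ) : μ.card = ν.card + 1 := by
  obtain ⟨c, -, hc, hμ⟩ := covBy_iff_addCorner.1 h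
  rw [YoungDiagram.card, hμ, card_insert_of_notMem hc]

theorem eq_of_covBy_of_notMem (h : ν ⋖ μ) {d : ℕ × ℕ} (hc : c ∈ μ) (hcν : c ∉ ν) (hd : d ∈ μ)
    (hdν : d ∉ ν) : c = d := by
  obtain ⟨e, -, -, hμ⟩ := covBy_iff_addCorner.1 h
  rw [← YoungDiagram.mem_cells, hμ] at hc hd
  exact (eq_of_mem_insert_of_notMem hc hcν).trans (eq_of_mem_insert_of_notMem hd hdν).symm

theorem covBy_iff_rowLen : ν ⋖ μ ↔ ∃ i, μ.rowLen = ν.rowLen + Pi.single i 1 := by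
  constructor
  · intro h
    obtain ⟨⟨i, j⟩, -, hc, hμ⟩ := covBy_iff_addCorner.1 h
    refine ⟨i, funext fun r => ?_⟩
    rw [Pi.add_apply, YoungDiagram.rowLen_eq_card, YoungDiagram.rowLen_eq_card, YoungDiagram.row,
      YoungDiagram.row, hμ, filter_insert]
    obtain rfl | hr := eq_or_ne i r
    · rw [if_pos rfl, card_insert_of_notMem fun h => hc (mem_filter.1 h).1, Pi.single_eq_same]
    · rw [if_neg hr, Pi.single_eq_of_ne' hr, add_zero]
  · rintro ⟨i, h⟩
    refine covBy_of_cells_covBy (covBy_iff_exists_insert.2 ⟨(i, ν.rowLen i), ?_, ?_⟩)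
    · rw [YoungDiagram.mem_cells, YoungDiagram.mem_iff_lt_rowLen]
      exact lt_irrefl _
    · ext ⟨r, j⟩
      simp only [mem_insert, YoungDiagram.mem_cells, YoungDiagram.mem_iff_lt_rowLen, h,
        Pi.add_apply, Pi.single_apply, Prod.mk.injEq]
      obtain rfl | hr := eq_or_ne r i
      · rw [if_pos rfl, Nat.lt_succ_iff_lt_or_eq]
        tauto
      · simp [hr]

theorem rowLen_le_of_covBy (h : ν ⋖ μ) (r : ℕ) : μ.rowLen r ≤ ν.rowLen r + 1 := by
  obtain ⟨i, h⟩ := covBy_iff_rowLen.1 h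
  rw [h, Pi.add_apply, Pi.single_apply]
  split_ifs <;> omega

/-- The corners of a diagram. -/
noncomputable def corners (μ : YoungDiagram) : Finset (ℕ × ℕ) :=
  open Classical in {c ∈ μ.cells | IsCorner μ c}

theorem mem_corners : c ∈ corners μ ↔ IsCorner μ c := by
  simp only [corners, mem_filter, YoungDiagram.mem_cells, and_iff_right_iff_imp]
  exact And.left

theorem image_cells_lowerCovers (μ : YoungDiagram) :
    YoungDiagram.cells '' {ν | ν ⋖ μ} = μ.cells.erase '' corners μ := by
  ext s
  simp only [Set.mem_image, Set.mem_ofPred_eq, mem_coe, mem_corners, covBy_iff_removeCorner]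
  constructor
  · rintro ⟨ν, ⟨c, hc, hν⟩, rfl⟩
    exact ⟨c, hc, hν.symm⟩
  · rintro ⟨c, hc, rfl⟩
    obtain ⟨ν, hν⟩ := exists_cells_eq_erase hc
    exact ⟨ν, ⟨c, hc, hν⟩, hν⟩

/-- The rows of a diagram which can be extended by one cell. -/
noncomputable def addableRows (μ : YoungDiagram) : Finset ℕ :=
  insert 0 ((corners μ).image fun c => c.1 + 1)

theorem mem_addableRows {i : ℕ} :
    i ∈ addableRows μ ↔ i = 0 ∨ μ.rowLen i < μ.rowLen (i - 1) := by
  simp only [addableRows, mem_insert, mem_image, mem_corners, Prod.exists, isCorner_iff_rowLen]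
  refine or_congr_right ⟨?_, fun h => ?_⟩
  · rintro ⟨i, j, h, rfl⟩
    rw [Nat.add_sub_cancel]
    omega
  · obtain _ | i := i
    · exact absurd h (lt_irrefl _)
    · rw [Nat.add_sub_cancel] at h
      exact ⟨i, μ.rowLen i - 1, by omega, rfl⟩

theorem card_addableRows (μ : YoungDiagram) : #(addableRows μ) = #(corners μ) + 1 := by
  rw [addableRows, card_insert_of_notMem (by simp), card_image_of_injOn]
  rintro ⟨i, j⟩ hc ⟨i', j'⟩ hc' h
  simp only [mem_coe, mem_corners, isCorner_iff_rowLen] at hc hc'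
  obtain rfl : i = i' := Nat.succ_injective h
  ext <;> omega

theorem image_rowLen_upperCovers (μ : YoungDiagram) :
    YoungDiagram.rowLen '' {β | μ ⋖ β} = (μ.rowLen + Pi.single · 1) '' addableRows μ := by
  ext f
  simp only [Set.mem_image, Set.mem_ofPred_eq, mem_coe, mem_addableRows, covBy_iff_rowLen]
  constructor
  · rintro ⟨β, ⟨i, h⟩, rfl⟩
    refine ⟨i, ?_, h.symm⟩
    obtain _ | i := i
    · exact Or.inl rfl
    · have := β.rowLen_anti i (i + 1) i.le_succ
      rw [h, Pi.add_apply, Pi.add_apply, Pi.single_eq_same,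
        Pi.single_eq_of_ne i.lt_succ_self.ne] at this
      exact Or.inr this
  · rintro ⟨i, hi, rfl⟩
    have anti : Antitone (μ.rowLen + Pi.single i 1) := antitone_nat_of_succ_le fun r => by
      have := μ.rowLen_anti r (r + 1) r.le_succ
      obtain rfl | hr := eq_or_ne (r + 1) i
      · simpa using hi
      · rw [Pi.add_apply, Pi.single_eq_of_ne hr]
        exact this.trans le_self_add
    have vanish : (μ.rowLen + Pi.single i 1 : ℕ → ℕ) (μ.colLen 0 + i + 1) = 0 := by
      have := μ.rowLen_anti (μ.colLen 0) (μ.colLen 0 + i + 1) (by omega)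
      rw [rowLen_colLen_zero, Nat.le_zero] at this
      rw [Pi.add_apply, this, Pi.single_eq_of_ne (by omega), add_zero]
    obtain ⟨β, hβ⟩ := exists_rowLen_eq anti vanish
    exact ⟨β, ⟨i, hβ⟩, hβ⟩

instance : FiniteCovers YoungDiagram where
  finite_lowerCovers μ := Set.Finite.of_finite_image (f := YoungDiagram.cells)
    (image_cells_lowerCovers μ ▸ (corners μ).finite_toSet.image _)
    fun _ _ _ _ => YoungDiagram.ext
  finite_upperCovers μ := Set.Finite.of_finite_image (f := YoungDiagram.rowLen)
    (image_rowLen_upperCovers μ ▸ (addableRows μ).finite_toSet.image _)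
    rowLen_injective.injOn

theorem card_lowerCovers (μ : YoungDiagram) : #(lowerCovers μ) = #(corners μ) := by
  rw [lowerCovers, ← Set.ncard_eq_toFinset_card _ (FiniteCovers.finite_lowerCovers μ),
    ← Set.ncard_image_of_injective _ fun _ _ => YoungDiagram.ext, image_cells_lowerCovers,
    Set.InjOn.ncard_image, Set.ncard_coe_finset]
  exact (erase_injOn μ.cells).mono fun c hc => (mem_corners.1 hc).1

theorem card_upperCovers (μ : YoungDiagram) : #(upperCovers μ) = #(lowerCovers μ) + 1 := by
  rw [card_lowerCovers, ← card_addableRows, upperCovers,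
    ← Set.ncard_eq_toFinset_card _ (FiniteCovers.finite_upperCovers μ),
    ← Set.ncard_image_of_injective _ rowLen_injective, image_rowLen_upperCovers,
    Set.ncard_image_of_injective, Set.ncard_coe_finset]
  intro i i' h
  have := congrFun (add_left_cancel h) i
  simpa [Pi.single_apply] using this

theorem sum_upperCovers_lowerCovers_eq {M : Type*} [AddCommMonoid M] (F : YoungDiagram → M)
    (γ : YoungDiagram) :
    ∑ β ∈ upperCovers γ, ∑ δ ∈ lowerCovers β, F δ =
      ∑ β ∈ lowerCovers γ, ∑ δ ∈ upperCovers β, F δ + F γ := by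
  rw [sum_upperCovers_lowerCovers, sum_lowerCovers_upperCovers, card_upperCovers, succ_nsmul]
  exact add_right_comm _ _ _

end YoungDiagram

section StandardTableau

namespace PartialST

variable {α γ : YoungDiagram} {k : ℕ} {c d : ℕ × ℕ}

theorem ext_label {S T : PartialST α k} (h : S.label = T.label) : S = T := by
  cases S
  cases T
  cases h
  rfl

theorem label_pos (T : PartialST α k) (hc : c ∈ α) : 1 ≤ T.label c :=
  (Finset.mem_Icc.1 (T.mem_of_cell c hc)).1

theorem label_le (T : PartialST α k) (c : ℕ × ℕ) : T.label c ≤ k := by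
  by_cases hc : c ∈ α
  · exact (Finset.mem_Icc.1 (T.mem_of_cell c hc)).2
  · exact (T.zero_of_not_cell c hc).le.trans k.zero_le

instance : Finite (PartialST α k) := by
  refine Finite.of_injective
    (fun (T : PartialST α k) (c : α.cells) => (⟨T.label c, Nat.lt_succ_of_le (T.label_le c)⟩ :
      Fin (k + 1))) fun S T h => ext_label (funext fun c => ?_)
  by_cases hc : c ∈ α
  · exact Fin.mk.inj (congrFun h ⟨c, hc⟩)
  · rw [S.zero_of_not_cell c hc, T.zero_of_not_cell c hc]

theorem label_lt_label (T : PartialST α k) (hcd : c < d) (hd : d ∈ α) :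
    T.label c < T.label d := by
  obtain ⟨i, j⟩ := c
  obtain ⟨i', j'⟩ := d
  rcases Prod.mk_lt_mk.1 hcd with ⟨hi, hj⟩ | ⟨hi, hj⟩
  · have down := T.col_incr i i' j' hi hd
    rcases hj.lt_or_eq with hj | rfl
    · exact (T.row_incr i j j' hj (α.up_left_mem hi.le le_rfl hd)).trans down
    · exact down
  · have right := T.row_incr i' j j' hj hd
    rcases hi.lt_or_eq with hi | rfl
    · exact (T.col_incr i i' j hi (α.up_left_mem le_rfl hj.le hd)).trans right
    · exact right

/-- A standard tableau from a labelling which is strictly increasing for the product order on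
cells. -/
def ofLabelLT (label : ℕ × ℕ → ℕ) (mem : ∀ c ∈ α, label c ∈ Finset.Icc 1 k)
    (zero : ∀ c ∉ α, label c = 0) (inj : ∀ c ∈ α, ∀ d ∈ α, label c = label d → c = d)
    (lt : ∀ c d, c < d → d ∈ α → label c < label d) : PartialST α k where
  label := label
  mem_of_cell := mem
  zero_of_not_cell := zero
  injOn := inj
  row_incr _ _ _ hj h := lt _ _ (Prod.mk_lt_mk_iff_right.2 hj) h
  col_incr _ _ _ hi h := lt _ _ (Prod.mk_lt_mk_iff_left.2 hi) h

/-- The tableau of shape `α` obtained from one of shape `γ ⋖ α` by giving the largest label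
to the additional cell. -/
def extend (h : γ ⋖ α) (T : PartialST γ k) : PartialST α (k + 1) :=
  ofLabelLT (fun c => if c ∈ γ then T.label c else if c ∈ α then k + 1 else 0)
    (fun c hc => by
      have := T.label_le c
      split_ifs with hcγ
      · exact Finset.mem_Icc.2 ⟨T.label_pos hcγ, by omega⟩
      · simp)
    (fun c hc => by rw [if_neg fun hcγ => hc (h.le hcγ), if_neg hc])
    (fun c hc d hd heq => by
      have := T.label_le c
      have := T.label_le d
      split_ifs at heq with hcγ hdγ hdγ
      · exact T.injOn c hcγ d hdγ heq
      · omega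
      · omega
      · exact eq_of_covBy_of_notMem h hc hcγ hd hdγ)
    (fun c d hcd hd => by
      have hc : c ∈ α := α.isLowerSet hcd.le hd
      have := T.label_le c
      split_ifs with hcγ hdγ hdγ
      · exact T.label_lt_label hcd hdγ
      · omega
      · exact absurd (γ.isLowerSet hcd.le hdγ) hcγ
      · exact absurd (eq_of_covBy_of_notMem h hc hcγ hd hdγ) hcd.ne)

theorem extend_label_of_mem (h : γ ⋖ α) (T : PartialST γ k) (hc : c ∈ γ) :
    (T.extend h).label c = T.label c :=
  if_pos hc

theorem extend_label_of_notMem (h : γ ⋖ α) (T : PartialST γ k) (hcα : c ∈ α) (hc : c ∉ γ) :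
    (T.extend h).label c = k + 1 :=
  (if_neg hc).trans (if_pos hcα)

theorem mem_iff_extend_label_le (h : γ ⋖ α) (T : PartialST γ k) :
    c ∈ γ ↔ c ∈ α ∧ (T.extend h).label c ≤ k := by
  refine ⟨fun hc => ⟨h.le hc, ?_⟩, fun ⟨hcα, hle⟩ => ?_⟩
  · rw [extend_label_of_mem h T hc]
    exact T.label_le c
  · by_contra hc
    rw [extend_label_of_notMem h T hcα hc] at hle
    omega

theorem extend_injective (h : γ ⋖ α) :
    Function.Injective (extend h : PartialST γ k → PartialST α (k + 1)) := by
  refine fun S T hST => ext_label (funext fun c => ?_)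
  by_cases hc : c ∈ γ
  · rw [← extend_label_of_mem h S hc, hST, extend_label_of_mem h T hc]
  · rw [S.zero_of_not_cell c hc, T.zero_of_not_cell c hc]

theorem exists_label_eq (hα : α.card = k) (S : PartialST α k) {x : ℕ}
    (hx : x ∈ Finset.Icc 1 k) : ∃ c ∈ α, S.label c = x :=
  surjOn_of_injOn_of_card_le S.label (s := α.cells) (fun c hc => S.mem_of_cell c hc)
    (fun c hc d hd h => S.injOn c hc d hd h) (by simpa using hα.ge) hx

theorem isCorner_of_label_eq (S : PartialST α k) (hc : c ∈ α) (h : S.label c = k) :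
    IsCorner α c := by
  refine isCorner_iff_maximal.2 ⟨hc, fun d hd hcd => ?_⟩
  by_contra hdc
  have := S.label_lt_label (hcd.lt_of_not_ge hdc) hd
  have := S.label_le d
  omega

/-- The restriction of a tableau of shape `α` to the shape `γ ≤ α`, when the labels in `γ` are
at most `k`. -/
def restrict {m : ℕ} (hγ : γ ≤ α) (S : PartialST α m) (hS : ∀ c ∈ γ, S.label c ≤ k) :
    PartialST γ k :=
  ofLabelLT (fun c => if c ∈ γ then S.label c else 0)
    (fun c hc => by
      rw [if_pos hc]
      exact Finset.mem_Icc.2 ⟨S.label_pos (hγ hc), hS c hc⟩)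
    (fun c hc => if_neg hc)
    (fun c hc d hd heq => by
      rw [if_pos hc, if_pos hd] at heq
      exact S.injOn c (hγ hc) d (hγ hd) heq)
    (fun c d hcd hd => by
      rw [if_pos hd, if_pos (show c ∈ γ from γ.isLowerSet hcd.le hd)]
      exact S.label_lt_label hcd (hγ hd))

theorem exists_extend_eq (hα : α.card = k + 1) (S : PartialST α (k + 1)) :
    ∃ (γ : YoungDiagram) (h : γ ⋖ α) (T : PartialST γ k), T.extend h = S := by
  obtain ⟨c, hc, hlabel⟩ := exists_label_eq hα S (right_mem_Icc.2 le_add_self)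
  have corner := S.isCorner_of_label_eq hc hlabel
  obtain ⟨γ, hγ⟩ := exists_cells_eq_erase corner
  have covBy : γ ⋖ α := covBy_iff_removeCorner.2 ⟨c, corner, hγ⟩
  have mem_γ (d) : d ∈ γ ↔ d ≠ c ∧ d ∈ α := by
    rw [← YoungDiagram.mem_cells, hγ, mem_erase, YoungDiagram.mem_cells]
  have label_le : ∀ d ∈ γ, S.label d ≤ k := fun d hd => by
    have ne : S.label d ≠ k + 1 := fun h =>
      ((mem_γ d).1 hd).1 (S.injOn d (covBy.le hd) c hc (h.trans hlabel.symm))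
    have := S.label_le d
    omega
  refine ⟨γ, covBy, S.restrict covBy.le label_le, ext_label (funext fun d => ?_)⟩
  by_cases hd : d ∈ γ
  · exact (extend_label_of_mem covBy _ hd).trans (if_pos hd)
  · by_cases hdα : d ∈ α
    · obtain rfl : d = c := by
        by_contra hne
        exact hd ((mem_γ d).2 ⟨hne, hdα⟩)
      rw [extend_label_of_notMem covBy _ hdα hd, hlabel]
    · rw [zero_of_not_cell _ d hdα, zero_of_not_cell _ d hdα]

theorem bijective_sigma_extend (hα : α.card = k + 1) :
    Function.Bijective fun p : Σ γ : lowerCovers α, PartialST (γ : YoungDiagram) k =>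
      p.2.extend (mem_lowerCovers.1 p.1.2) := by
  constructor
  · rintro ⟨⟨γ, hγ⟩, S⟩ ⟨⟨γ', hγ'⟩, T⟩ h
    rw [mem_lowerCovers] at hγ hγ'
    obtain rfl : γ = γ' := SetLike.ext fun c => by
      rw [mem_iff_extend_label_le hγ S, mem_iff_extend_label_le hγ' T]
      exact iff_of_eq (congrArg (fun U => c ∈ α ∧ U.label c ≤ k) h)
    obtain rfl := extend_injective hγ h
    rfl
  · intro S
    obtain ⟨γ, hγ, T, hT⟩ := exists_extend_eq hα S
    exact ⟨⟨⟨γ, mem_lowerCovers.2 hγ⟩, T⟩, hT⟩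

end PartialST

theorem fSYT_bot : fSYT ⊥ = 1 := by
  rw [fSYT, Nat.card_eq_one_iff_unique]
  refine ⟨⟨fun S T => PartialST.ext_label (funext fun c => ?_)⟩,
    ⟨⟨fun _ => 0, by simp, by simp, by simp, by simp, by simp⟩⟩⟩
  rw [S.zero_of_not_cell c (YoungDiagram.notMem_bot c),
    T.zero_of_not_cell c (YoungDiagram.notMem_bot c)]

theorem fSYT_eq_sum_lowerCovers {α : YoungDiagram} (h : α ≠ ⊥) :
    fSYT α = ∑ γ ∈ lowerCovers α, fSYT γ := by
  obtain ⟨k, hk⟩ := Nat.exists_eq_succ_of_ne_zero (mt card_eq_zero_iff_eq_bot.1 h)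
  rw [fSYT, hk, ← Nat.card_congr (.ofBijective _ (PartialST.bijective_sigma_extend hk)),
    Nat.card_sigma, ← sum_coe_sort (lowerCovers α) fSYT]
  refine sum_congr rfl fun γ _ => ?_
  have := card_eq_of_covBy (mem_lowerCovers.1 γ.2)
  rw [fSYT, show YoungDiagram.card γ = k by omega]

theorem sum_fSYT_upperCovers (γ : YoungDiagram) :
    ∑ β ∈ upperCovers γ, fSYT β = (γ.card + 1) * fSYT γ := by
  induction hm : γ.card using Nat.strong_induction_on generalizing γ with
  | _ m ih =>
    subst hm
    have lower : γ.card * ∑ β ∈ lowerCovers γ, fSYT β = γ.card * fSYT γ := by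
      obtain rfl | hγ := eq_or_ne γ ⊥
      · simp
      · rw [fSYT_eq_sum_lowerCovers hγ]
    calc ∑ β ∈ upperCovers γ, fSYT β
        = ∑ β ∈ upperCovers γ, ∑ δ ∈ lowerCovers β, fSYT δ :=
          sum_congr rfl fun β hβ => fSYT_eq_sum_lowerCovers (mem_upperCovers.1 hβ).lt.ne_bot
      _ = ∑ β ∈ lowerCovers γ, ∑ δ ∈ upperCovers β, fSYT δ + fSYT γ :=
          sum_upperCovers_lowerCovers_eq fSYT γ
      _ = ∑ β ∈ lowerCovers γ, γ.card * fSYT β + fSYT γ := by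
          congr 1
          refine sum_congr rfl fun β hβ => ?_
          have := card_eq_of_covBy (mem_lowerCovers.1 hβ)
          rw [this, ih β.card (by omega) β rfl]
      _ = (γ.card + 1) * fSYT γ := by rw [← mul_sum, lower, add_one_mul]

end StandardTableau

section Truncate

variable {μ ν α : YoungDiagram}

theorem mem_truncate {i j : ℕ} : (i, j) ∈ truncate μ ↔ (i + 1, j) ∈ μ := by
  simp only [truncate, ← YoungDiagram.mem_cells, mem_image, mem_filter, Prod.exists,
    Prod.mk.injEq]
  constructor
  · rintro ⟨i', j', ⟨h, hi'⟩, rfl, rfl⟩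
    rwa [Nat.sub_add_cancel hi']
  · exact fun h => ⟨i + 1, j, ⟨h, Nat.le_add_left 1 i⟩, rfl, rfl⟩

theorem rowLen_truncate (μ : YoungDiagram) (i : ℕ) :
    (truncate μ).rowLen i = μ.rowLen (i + 1) :=
  eq_of_forall_lt_iff fun j => by
    rw [← YoungDiagram.mem_iff_lt_rowLen, mem_truncate, YoungDiagram.mem_iff_lt_rowLen]

theorem eq_iff_truncate_eq :
    μ = ν ↔ truncate μ = truncate ν ∧ μ.rowLen 0 = ν.rowLen 0 := by
  refine ⟨fun h => h ▸ ⟨rfl, rfl⟩, fun ⟨htail, hrow⟩ => rowLen_injective (funext fun i => ?_)⟩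
  obtain _ | i := i
  · exact hrow
  · rw [← rowLen_truncate, htail, rowLen_truncate]

theorem exists_truncate_eq {a : ℕ} (h : α.rowLen 0 ≤ a) :
    ∃ μ, truncate μ = α ∧ μ.rowLen 0 = a := by
  let f : ℕ → ℕ := fun i => Nat.casesOn i a α.rowLen
  have anti : Antitone f := antitone_nat_of_succ_le fun i => by
    obtain _ | i := i
    · exact h
    · exact α.rowLen_anti i (i + 1) i.le_succ
  obtain ⟨μ, hμ⟩ := exists_rowLen_eq anti (N := α.colLen 0 + 1) (rowLen_colLen_zero α)
  exact ⟨μ, rowLen_injective (funext fun i => by rw [rowLen_truncate, hμ]), congrFun hμ 0⟩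

theorem card_eq_card_truncate_add (μ : YoungDiagram) :
    μ.card = (truncate μ).card + μ.rowLen 0 := by
  rw [YoungDiagram.rowLen_eq_card, YoungDiagram.card, YoungDiagram.card,
    ← card_filter_add_card_filter_not (s := μ.cells) (fun c => 1 ≤ c.1)]
  congr 1
  · refine (card_image_of_injOn ?_).symm
    rintro ⟨i, j⟩ hc ⟨i', j'⟩ hc' h
    simp only [coe_filter, Set.mem_ofPred_eq, Prod.mk.injEq] at hc hc' h
    ext <;> simp only <;> omega
  · simp only [YoungDiagram.row, not_le, Nat.lt_one_iff]

theorem covBy_iff_truncate :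
    ν ⋖ μ ↔ truncate ν = truncate μ ∧ μ.rowLen 0 = ν.rowLen 0 + 1 ∨
      truncate ν ⋖ truncate μ ∧ μ.rowLen 0 = ν.rowLen 0 := by
  simp only [covBy_iff_rowLen, ← rowLen_injective.eq_iff (a := truncate ν), funext_iff,
    rowLen_truncate, Pi.add_apply]
  constructor
  · rintro ⟨_ | i, h⟩
    · exact Or.inl ⟨fun r => by simp [h (r + 1)], by simp [h 0]⟩
    · refine Or.inr ⟨⟨i, fun r => ?_⟩, by simp [h 0]⟩
      rw [h (r + 1)]
      simp [Pi.single_apply]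
  · rintro (⟨htail, hrow⟩ | ⟨⟨i, htail⟩, hrow⟩)
    · exact ⟨0, fun r => by obtain _ | r := r <;> simp [*]⟩
    · refine ⟨i + 1, fun r => ?_⟩
      obtain _ | r := r <;> simp [*, Pi.single_apply]

section Sum

variable {M : Type*} [AddCommMonoid M] {F : YoungDiagram → M}

theorem sum_upperCovers_truncate
    (hF : ∀ β ∈ upperCovers (truncate ν), ν.rowLen 0 < β.rowLen 0 → F β = 0) :
    ∑ μ ∈ upperCovers ν, F (truncate μ) =
      F (truncate ν) + ∑ β ∈ upperCovers (truncate ν), F β := by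
  obtain ⟨ν', htail, hrow⟩ := exists_truncate_eq (α := truncate ν) (a := ν.rowLen 0 + 1)
    ((rowLen_truncate ν 0).trans_le ((ν.rowLen_anti 0 1 zero_le_one).trans (Nat.le_succ _)))
  have first : {μ ∈ upperCovers ν | ¬μ.rowLen 0 = ν.rowLen 0} = {ν'} := by
    ext μ
    rw [mem_filter, mem_upperCovers, covBy_iff_truncate, mem_singleton,
      eq_iff_truncate_eq (μ := μ) (ν := ν'), htail, hrow]
    grind
  rw [← sum_filter_add_sum_filter_not _ fun μ => μ.rowLen 0 = ν.rowLen 0, first, sum_singleton,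
    htail, add_comm]
  congr 1
  refine sum_of_injOn truncate (fun μ hμ μ' hμ' h => ?_) (fun μ hμ => ?_) (fun β hβ hnot => ?_)
    fun _ _ => rfl
  · exact eq_iff_truncate_eq.2 ⟨h, (mem_filter.1 hμ).2.trans (mem_filter.1 hμ').2.symm⟩
  · rw [mem_coe, mem_filter, mem_upperCovers, covBy_iff_truncate] at hμ
    rw [mem_coe, mem_upperCovers]
    grind
  · refine hF β hβ (lt_of_not_ge fun hle => hnot ?_)
    obtain ⟨μ, rfl, hμ⟩ := exists_truncate_eq hle
    exact ⟨μ, mem_filter.2 ⟨mem_upperCovers.2 (covBy_iff_truncate.2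
      (Or.inr ⟨mem_upperCovers.1 hβ, hμ⟩)), hμ⟩, rfl⟩

theorem sum_filter_lowerCovers_truncate :
    ∑ μ ∈ lowerCovers ν with μ.rowLen 0 = ν.rowLen 0, F (truncate μ) =
      ∑ β ∈ lowerCovers (truncate ν), F β := by
  refine sum_of_injOn truncate (fun μ hμ μ' hμ' h => ?_) (fun μ hμ => ?_) (fun β hβ hnot => ?_)
    fun _ _ => rfl
  · exact eq_iff_truncate_eq.2 ⟨h, (mem_filter.1 hμ).2.trans (mem_filter.1 hμ').2.symm⟩
  · rw [mem_coe, mem_filter, mem_lowerCovers, covBy_iff_truncate] at hμ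
    rw [mem_coe, mem_lowerCovers]
    grind
  · rw [mem_lowerCovers] at hβ
    have fits : β.rowLen 0 ≤ ν.rowLen 0 := by
      have := le_iff_rowLen_le.1 hβ.le 0
      rw [rowLen_truncate] at this
      exact this.trans (ν.rowLen_anti 0 1 zero_le_one)
    obtain ⟨μ, rfl, hμ⟩ := exists_truncate_eq fits
    exact absurd ⟨μ, mem_filter.2 ⟨mem_lowerCovers.2 (covBy_iff_truncate.2
      (Or.inr ⟨hβ, hμ.symm⟩)), hμ⟩, rfl⟩ hnot

theorem sum_filter_not_lowerCovers_truncate (hF : ν.rowLen 0 = ν.rowLen 1 → F (truncate ν) = 0) :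
    ∑ μ ∈ lowerCovers ν with ¬μ.rowLen 0 = ν.rowLen 0, F (truncate μ) = F (truncate ν) := by
  have mem_iff {μ} : μ ∈ {μ ∈ lowerCovers ν | ¬μ.rowLen 0 = ν.rowLen 0} ↔
      truncate μ = truncate ν ∧ ν.rowLen 0 = μ.rowLen 0 + 1 := by
    rw [mem_filter, mem_lowerCovers, covBy_iff_truncate]
    grind
  by_cases heq : ν.rowLen 0 = ν.rowLen 1
  · refine (sum_eq_zero fun μ hμ => ?_).trans (hF heq).symm
    rw [(mem_iff.1 hμ).1, hF heq]
  · have := ν.rowLen_anti 0 1 zero_le_one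
    obtain ⟨ν', htail, hrow⟩ := exists_truncate_eq (α := truncate ν) (a := ν.rowLen 0 - 1)
      (by rw [rowLen_truncate, zero_add]; omega)
    rw [← htail, ← sum_singleton (fun μ => F (truncate μ)) ν']
    refine sum_congr (Finset.ext fun μ => ?_) fun _ _ => rfl
    rw [mem_iff, mem_singleton, eq_iff_truncate_eq (μ := μ) (ν := ν'), htail, hrow]
    exact and_congr_right fun _ => by omega

theorem sum_lowerCovers_truncate (hF : ν.rowLen 0 = ν.rowLen 1 → F (truncate ν) = 0) :
    ∑ μ ∈ lowerCovers ν, F (truncate μ) =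
      F (truncate ν) + ∑ β ∈ lowerCovers (truncate ν), F β := by
  rw [← sum_filter_add_sum_filter_not _ fun μ => μ.rowLen 0 = ν.rowLen 0,
    sum_filter_lowerCovers_truncate, sum_filter_not_lowerCovers_truncate hF, add_comm]

end Sum

end Truncate

section KroneckerTableau

variable {μ lam : YoungDiagram} {k : ℕ}

theorem moveCorner_iff_mem_neighbors : MoveCorner μ lam ↔ μ ∈ neighbors lam := by
  rw [mem_neighbors]
  refine and_congr ne_comm ⟨?_, ?_⟩
  · rintro ⟨c, c', hc, hc', hnot, hcells⟩
    obtain ⟨κ, hκ⟩ := exists_cells_eq_erase hc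
    rw [← hκ] at hnot hcells
    exact ⟨κ, covBy_iff_addCorner.2 ⟨c', hc', hnot, hcells⟩, covBy_iff_removeCorner.2 ⟨c, hc, hκ⟩⟩
  · rintro ⟨κ, hlam, hμ⟩
    obtain ⟨c, hc, hκ⟩ := covBy_iff_removeCorner.1 hμ
    obtain ⟨c', hc', hnot, hcells⟩ := covBy_iff_addCorner.1 hlam
    rw [hκ] at hnot hcells
    exact ⟨c, c', hc, hc', hnot, hcells⟩

theorem existsUnique_isFirstCorner (h : lam ≠ ⊥) : ∃! c, IsFirstCorner lam c := by
  obtain ⟨j, hj⟩ : ∃ j, lam.rowLen 0 = j + 1 := by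
    obtain ⟨⟨i, j⟩, hc⟩ : (lam : Set (ℕ × ℕ)).Nonempty :=
      Set.nonempty_iff_ne_empty.2 fun h0 =>
        h (SetLike.coe_injective (h0.trans YoungDiagram.coe_bot.symm))
    have := (YoungDiagram.mem_iff_lt_rowLen.1 hc).trans_le (lam.rowLen_anti 0 i i.zero_le)
    exact Nat.exists_eq_succ_of_ne_zero (by omega)
  have isFirstCorner_iff {i j'} : IsFirstCorner lam (i, j') ↔ j' = j ∧ lam.colLen j = i + 1 := by
    have := lam.rowLen_anti 0 i i.zero_le
    have mem := YoungDiagram.mem_iff_lt_rowLen (μ := lam) (i := i) (j := j)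
    have mem' := YoungDiagram.mem_iff_lt_rowLen (μ := lam) (i := i + 1) (j := j)
    rw [YoungDiagram.mem_iff_lt_colLen] at mem mem'
    rw [IsFirstCorner, isCorner_iff_rowLen]
    dsimp only
    omega
  have hcol : lam.colLen j ≠ 0 := (YoungDiagram.mem_iff_lt_colLen.1
    (YoungDiagram.mem_iff_lt_rowLen.2 (hj.ge : j < lam.rowLen 0))).ne'
  obtain ⟨i, hi⟩ := Nat.exists_eq_succ_of_ne_zero hcol
  refine ⟨(i, j), isFirstCorner_iff.2 ⟨rfl, hi⟩, fun ⟨i', j'⟩ h' => ?_⟩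
  obtain ⟨rfl, hi'⟩ := isFirstCorner_iff.1 h'
  rw [Nat.succ_injective (hi.symm.trans hi')]

open Classical in
/-- The corners of a diagram other than its first corner. -/
noncomputable def nonFirstCorners (lam : YoungDiagram) : Finset (ℕ × ℕ) :=
  {c ∈ corners lam | ¬IsFirstCorner lam c}

theorem mem_nonFirstCorners {c : ℕ × ℕ} :
    c ∈ nonFirstCorners lam ↔ IsCorner lam c ∧ ¬IsFirstCorner lam c := by
  simp only [nonFirstCorners, mem_filter, mem_corners]

theorem card_nonFirstCorners (h : lam ≠ ⊥) : #(nonFirstCorners lam) + 1 = #(lowerCovers lam) := by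
  classical
  obtain ⟨c, hc, unique⟩ := existsUnique_isFirstCorner h
  have eq_erase : nonFirstCorners lam = (corners lam).erase c := by
    ext d
    rw [mem_nonFirstCorners, mem_erase, mem_corners, and_comm,
      show IsFirstCorner lam d ↔ d = c from ⟨unique d, fun hd => hd ▸ hc⟩]
  rw [eq_erase, card_lowerCovers, card_erase_add_one (mem_corners.2 hc.1)]

/-- The possible last steps of a Kronecker tableau of final shape `lam`: either the position of
a corner has changed, and the step is given by the previous shape, or a corner is distinguished,
and the step is given by this corner. -/
abbrev LastStep (lam : YoungDiagram) : Type :=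
  neighbors lam ⊕ nonFirstCorners lam

namespace LastStep

/-- The shape before a step. -/
def source : LastStep lam → YoungDiagram :=
  Sum.elim Subtype.val fun _ => lam

/-- The corner distinguished in a step, if any. -/
def mark : LastStep lam → Option (ℕ × ℕ) :=
  Sum.elim (fun _ => none) fun c => some c.1

theorem exists_source_mark_iff {d : Option (ℕ × ℕ)} :
    (∃ s : LastStep lam, s.source = μ ∧ s.mark = d) ↔
      (MoveCorner μ lam ∧ d = none) ∨
        (lam = μ ∧ ∃ c, d = some c ∧ IsCorner lam c ∧ ¬IsFirstCorner lam c) := by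
  simp only [moveCorner_iff_mem_neighbors, ← mem_nonFirstCorners, Sum.exists, source, mark,
    Sum.elim_inl, Sum.elim_inr, Subtype.exists]
  grind

theorem eq_of_source_mark {s t : LastStep lam} (hsource : s.source = t.source)
    (hmark : s.mark = t.mark) : s = t := by
  rcases s with s | s <;> rcases t with t | t
  · exact congrArg _ (Subtype.ext hsource)
  · cases hmark
  · cases hmark
  · exact congrArg _ (Subtype.ext (Option.some_injective _ hmark))

end LastStep

namespace KroneckerTableau

theorem ext_seq_dist {S T : KroneckerTableau k μ lam} (hseq : S.seq = T.seq)
    (hdist : S.dist = T.dist) : S = T := by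
  cases S
  cases T
  cases hseq
  cases hdist
  rfl

instance : Subsingleton (KroneckerTableau 0 μ lam) :=
  ⟨fun S T => ext_seq_dist
    (funext fun i => by rw [Fin.fin_one_eq_zero i, S.init, T.init])
    (funext fun i => i.elim0)⟩

theorem card_zero [DecidableEq YoungDiagram] :
    Nat.card (KroneckerTableau 0 μ lam) = if μ = lam then 1 else 0 := by
  split_ifs with h
  · subst h
    have : Nonempty (KroneckerTableau 0 μ μ) :=
      ⟨⟨fun _ => μ, fun _ => none, rfl, rfl, fun i => i.elim0⟩⟩
    exact Nat.card_eq_one_iff_unique.2 ⟨inferInstance, this⟩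
  · have : IsEmpty (KroneckerTableau 0 μ lam) := ⟨fun S => h (S.init.symm.trans S.final)⟩
    exact Nat.card_of_isEmpty

/-- The tableau obtained by adding a last step. -/
def snoc (s : LastStep lam) (S : KroneckerTableau k μ s.source) :
    KroneckerTableau (k + 1) μ lam where
  seq := Fin.snoc (α := fun _ => YoungDiagram) S.seq lam
  dist := Fin.snoc (α := fun _ => Option (ℕ × ℕ)) S.dist s.mark
  init := by rw [← Fin.castSucc_zero, Fin.snoc_castSucc, S.init]
  final := Fin.snoc_last _ _
  step := Fin.lastCases
    (by
      rw [Fin.succ_last, Fin.snoc_last, Fin.snoc_last, Fin.snoc_castSucc, S.final]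
      exact LastStep.exists_source_mark_iff.1 ⟨s, rfl, rfl⟩)
    (fun i => by
      rw [Fin.succ_castSucc, Fin.snoc_castSucc, Fin.snoc_castSucc, Fin.snoc_castSucc]
      exact S.step i)

theorem exists_snoc_eq (S : KroneckerTableau (k + 1) μ lam) :
    ∃ (s : LastStep lam) (T : KroneckerTableau k μ s.source), T.snoc s = S := by
  have hlast := S.step (Fin.last k)
  rw [Fin.succ_last, S.final] at hlast
  obtain ⟨s, hsource, hmark⟩ := LastStep.exists_source_mark_iff.2 hlast
  refine ⟨s, ⟨Fin.init S.seq, Fin.init S.dist, S.init, hsource.symm, fun i => ?_⟩,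
    ext_seq_dist ?_ ?_⟩
  · have hstep := S.step i.castSucc
    rw [Fin.succ_castSucc] at hstep
    exact hstep
  · exact (congrArg (Fin.snoc _) S.final.symm).trans (Fin.snoc_init_self S.seq)
  · exact (congrArg (Fin.snoc _) hmark).trans (Fin.snoc_init_self S.dist)

theorem bijective_sigma_snoc :
    Function.Bijective fun p : Σ s : LastStep lam, KroneckerTableau k μ s.source =>
      p.2.snoc p.1 := by
  refine ⟨?_, fun S => ?_⟩
  · rintro ⟨s, S⟩ ⟨t, T⟩ h
    obtain ⟨hseq, -⟩ := (Fin.snoc_inj (α := fun _ => YoungDiagram)).1 (congrArg seq h)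
    obtain ⟨hdist, hmark⟩ :=
      (Fin.snoc_inj (α := fun _ => Option (ℕ × ℕ))).1 (congrArg KroneckerTableau.dist h)
    obtain rfl : s = t := LastStep.eq_of_source_mark
      (S.final.symm.trans ((congrFun hseq _).trans T.final)) hmark
    obtain rfl : S = T := ext_seq_dist hseq hdist
    rfl
  · obtain ⟨s, T, h⟩ := S.exists_snoc_eq
    exact ⟨⟨s, T⟩, h⟩

instance : Finite (KroneckerTableau k μ lam) := by
  induction k generalizing lam with
  | zero => infer_instance
  | succ k ih => exact Finite.of_surjective _ bijective_sigma_snoc.2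

theorem card_succ (h : lam ≠ ⊥) :
    Nat.card (KroneckerTableau (k + 1) μ lam) + Nat.card (KroneckerTableau k μ lam) =
      ∑ ν ∈ lowerCovers lam, ∑ μ' ∈ upperCovers ν, Nat.card (KroneckerTableau k μ μ') := by
  rw [sum_lowerCovers_upperCovers, ← Nat.card_eq_of_bijective _ bijective_sigma_snoc,
    Nat.card_sigma, Fintype.sum_sum_type, ← card_nonFirstCorners h]
  simp only [LastStep.source, Sum.elim_inl, Sum.elim_inr, sum_const, smul_eq_mul, card_univ,
    Fintype.card_coe]
  rw [sum_coe_sort (neighbors lam) fun μ' => Nat.card (KroneckerTableau k μ μ')]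
  ring

end KroneckerTableau

end KroneckerTableau

section AssociatedStirling

/-- The associated Stirling numbers of the second kind, defined by their recurrence relation: in
a partition of `n + 1` points without singletons, removing a point from its block either leaves
a partition of the same kind of the other points, or isolates one of these. -/
def assocStirling : ℕ → ℕ → ℕ
  | 0, 0 => 1
  | 0, _ + 1 => 0
  | _ + 1, 0 => 0
  | n + 1, k + 1 => (k + 1) * assocStirling n (k + 1) + n * assocStirling (n - 1) k

theorem assocStirling_eq_zero {n k : ℕ} (h : n < 2 * k) : assocStirling n k = 0 := by
  induction n using Nat.strong_induction_on generalizing k with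
  | _ n ih =>
    obtain _ | k := k
    · omega
    obtain _ | _ | n := n
    · rw [assocStirling]
    · rw [assocStirling, ih 0 one_pos (by omega), mul_zero, zero_mul, add_zero]
    · rw [assocStirling, ih (n + 1) (by omega) (by omega), Nat.add_sub_cancel,
        ih n (by omega) (by omega), mul_zero, mul_zero,
        add_zero]

variable {X : Type*} [DecidableEq X] {s B C : Finset X} {a : X} {k : ℕ}

/-- The partitions of `s` into `k` blocks of size at least two. -/
def partitionsWithoutSingletons (s : Finset X) (k : ℕ) : Finset (Finpartition s) :=
  {P | #P.parts = k ∧ ∀ b ∈ P.parts, 2 ≤ #b}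

theorem mem_partitionsWithoutSingletons {P : Finpartition s} :
    P ∈ partitionsWithoutSingletons s k ↔ #P.parts = k ∧ ∀ b ∈ P.parts, 2 ≤ #b := by
  simp only [partitionsWithoutSingletons, mem_filter, mem_univ, true_and]

theorem card_filter_mem_parts (hBs : B ⊆ s) (hB : 2 ≤ #B) :
    #{P ∈ partitionsWithoutSingletons s (k + 1) | B ∈ P.parts} =
      #(partitionsWithoutSingletons (s \ B) k) := by
  have hne : B ≠ ⊥ := by
    rintro rfl
    simp at hB
  have notMem (P : Finpartition (s \ B)) : B ∉ P.parts :=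
    fun h => hne (disjoint_sdiff.eq_bot_of_le (P.le h))
  symm
  refine card_bij (fun P _ => P.extend hne sdiff_disjoint (sdiff_union_of_subset hBs))
    (fun P hP => ?_) (fun P _ Q _ h => ?_) fun Q hQ => ?_
  · rw [mem_partitionsWithoutSingletons] at hP
    rw [mem_filter, mem_partitionsWithoutSingletons, Finpartition.card_extend, hP.1]
    exact ⟨⟨rfl, (forall_mem_insert _ _ _).2 ⟨hB, hP.2⟩⟩, mem_insert_self _ _⟩
  · refine Finpartition.ext ?_
    rw [← erase_insert (notMem P), ← erase_insert (notMem Q)]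
    exact congrArg (fun R : Finpartition s => R.parts.erase B) h
  · rw [mem_filter, mem_partitionsWithoutSingletons] at hQ
    obtain ⟨⟨hcard, hblocks⟩, hBQ⟩ := hQ
    have sup_erase : (Q.parts.erase B).sup id = s \ B := by
      have disjoint := Q.supIndep (erase_subset B _) hBQ (notMem_erase B _)
      rw [id_eq] at disjoint
      have sup_eq : B ⊔ (Q.parts.erase B).sup id = s := by
        rw [← id_eq B, ← sup_insert, id_eq, insert_erase hBQ, Q.sup_parts]
      rw [← disjoint.sup_sdiff_cancel_left, sup_eq]
    refine ⟨Q.ofSubset (erase_subset B _) sup_erase, ?_, Finpartition.ext (insert_erase hBQ)⟩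
    rw [mem_partitionsWithoutSingletons]
    exact ⟨by rw [Finpartition.ofSubset, card_erase_of_mem hBQ, hcard, Nat.add_sub_cancel],
      fun b hb => hblocks b (mem_of_mem_erase hb)⟩

theorem succ_mul_card_partitionsWithoutSingletons :
    (k + 1) * #(partitionsWithoutSingletons s (k + 1)) =
      ∑ B ∈ s.powerset with 2 ≤ #B, #(partitionsWithoutSingletons (s \ B) k) := by
  calc (k + 1) * #(partitionsWithoutSingletons s (k + 1))
      = ∑ P ∈ partitionsWithoutSingletons s (k + 1), #P.parts := by
        rw [sum_congr rfl fun P hP => (mem_partitionsWithoutSingletons.1 hP).1, sum_const,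
          smul_eq_mul, mul_comm]
    _ = ∑ P ∈ partitionsWithoutSingletons s (k + 1),
          #({B ∈ s.powerset | 2 ≤ #B}.bipartiteAbove (fun P B => B ∈ P.parts) P) := by
        refine sum_congr rfl fun P hP => congrArg card (Finset.ext fun B => ?_)
        have := (mem_partitionsWithoutSingletons.1 hP).2 B
        have := P.le (b := B)
        simp only [mem_bipartiteAbove, mem_filter, mem_powerset]
        tauto
    _ = ∑ B ∈ s.powerset with 2 ≤ #B,
          #{P ∈ partitionsWithoutSingletons s (k + 1) | B ∈ P.parts} :=
        sum_card_bipartiteAbove_eq_sum_card_bipartiteBelow _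
    _ = _ := sum_congr rfl fun B hB => by
        obtain ⟨hBs, hB⟩ := mem_filter.1 hB
        exact card_filter_mem_parts (mem_powerset.1 hBs) hB

theorem card_partitionsWithoutSingletons_insert (ha : a ∉ s) :
    #(partitionsWithoutSingletons (insert a s) (k + 1)) =
      ∑ C ∈ s.powerset with C.Nonempty, #(partitionsWithoutSingletons (s \ C) k) := by
  have ha_mem (P : Finpartition (insert a s)) : a ∈ P.part a :=
    P.mem_part_self.2 (mem_insert_self a s)
  have part_mem (P : Finpartition (insert a s)) : P.part a ∈ P.parts :=
    P.part_mem.2 (mem_insert_self a s)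
  rw [card_eq_sum_card_fiberwise (f := fun P => (P.part a).erase a)
    (t := {C ∈ s.powerset | C.Nonempty})]
  · refine sum_congr rfl fun C hC => ?_
    obtain ⟨hCs, hC⟩ := mem_filter.1 hC
    rw [mem_powerset] at hCs
    have haC : a ∉ C := fun h => ha (hCs h)
    rw [← sdiff_insert_of_notMem ha, ← insert_sdiff_insert,
      ← card_filter_mem_parts (insert_subset_insert a hCs) (by
        rw [card_insert_of_notMem haC]
        exact Nat.succ_le_succ hC.card_pos)]
    refine congrArg card (filter_congr fun P _ => ⟨fun h => ?_, fun h => ?_⟩)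
    · rw [← h, insert_erase (ha_mem P)]
      exact part_mem P
    · rw [P.part_eq_of_mem h (mem_insert_self a C), erase_insert haC]
  · intro P hP
    have := (mem_partitionsWithoutSingletons.1 hP).2 _ (part_mem P)
    rw [mem_coe, mem_filter, mem_powerset, ← card_pos, card_erase_of_mem (ha_mem P)]
    exact ⟨subset_insert_iff.1 (P.part_subset a), by omega⟩

theorem card_partitionsWithoutSingletons_insert_eq (ha : a ∉ s) :
    #(partitionsWithoutSingletons (insert a s) (k + 1)) =
      (k + 1) * #(partitionsWithoutSingletons s (k + 1)) +
        ∑ b ∈ s, #(partitionsWithoutSingletons (s.erase b) k) := by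
  rw [card_partitionsWithoutSingletons_insert ha, succ_mul_card_partitionsWithoutSingletons,
    ← sum_filter_add_sum_filter_not _ fun C => 2 ≤ #C, filter_filter, filter_filter]
  congr 1
  · refine sum_congr (filter_congr fun C _ => ?_) fun _ _ => rfl
    rw [← card_pos]
    omega
  · have singletons :
        {C ∈ s.powerset | C.Nonempty ∧ ¬2 ≤ #C} = s.map ⟨singleton, singleton_injective⟩ := by
      rw [← powersetCard_one, powersetCard_eq_filter]
      refine filter_congr fun C _ => ?_
      rw [← card_pos]
      omega
    rw [singletons, sum_map]
    exact sum_congr rfl fun b _ => by rw [Function.Embedding.coeFn_mk, sdiff_singleton_eq_erase]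

theorem card_partitionsWithoutSingletons_empty (k : ℕ) :
    #(partitionsWithoutSingletons (∅ : Finset X) k) = assocStirling 0 k := by
  have parts_eq (P : Finpartition (∅ : Finset X)) : P.parts = ∅ :=
    Finpartition.parts_eq_empty_iff.2 rfl
  have mem_iff (P : Finpartition (∅ : Finset X)) :
      P ∈ partitionsWithoutSingletons ∅ k ↔ k = 0 := by
    rw [mem_partitionsWithoutSingletons, parts_eq, card_empty, eq_comm]
    exact and_iff_left fun b hb => absurd hb (notMem_empty b)
  obtain _ | k := k
  · rw [assocStirling, eq_univ_of_forall fun P => (mem_iff P).2 rfl, card_univ,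
      Fintype.card_eq_one_iff]
    exact ⟨.empty _, fun P => Finpartition.ext (parts_eq P)⟩
  · rw [assocStirling, card_eq_zero, eq_empty_iff_forall_notMem]
    exact fun P hP => k.succ_ne_zero ((mem_iff P).1 hP)

theorem card_partitionsWithoutSingletons (s : Finset X) (k : ℕ) :
    #(partitionsWithoutSingletons s k) = assocStirling #s k := by
  induction hn : #s using Nat.strong_induction_on generalizing s k with
  | _ n ih =>
    subst hn
    obtain rfl | ⟨a, has⟩ := s.eq_empty_or_nonempty
    · rw [card_partitionsWithoutSingletons_empty, card_empty]
    obtain ⟨s, ha, rfl⟩ : ∃ t, a ∉ t ∧ insert a t = s :=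
      ⟨s.erase a, notMem_erase a s, insert_erase has⟩
    rw [card_insert_of_notMem ha] at ih ⊢
    obtain _ | k := k
    · have parts_ne (P : Finpartition (insert a s)) : P.parts ≠ ∅ :=
        (P.parts_nonempty (insert_ne_empty a s)).ne_empty
      rw [assocStirling, card_eq_zero, partitionsWithoutSingletons, filter_eq_empty_iff]
      exact fun P _ h => parts_ne P (card_eq_zero.1 h.1)
    · rw [card_partitionsWithoutSingletons_insert_eq ha, assocStirling, ih _ (by omega) _ _ rfl]
      congr 1
      refine sum_const_nat fun b hb => ?_
      rw [← card_erase_of_mem hb, ih _ (by rw [card_erase_of_mem hb]; omega) _ _ rfl]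

theorem p2_eq_assocStirling (n k : ℕ) : p2 n k = assocStirling n k := by
  have card_univ := card_partitionsWithoutSingletons (univ : Finset (Fin n)) k
  rw [card_fin] at card_univ
  rw [p2, ← card_univ, ← Nat.card_eq_finsetCard]
  exact Nat.card_congr (Equiv.subtypeEquivRight fun P => mem_partitionsWithoutSingletons.symm)

end AssociatedStirling

section Coefficients

open Polynomial

/-- The generating polynomial of the associated Stirling numbers. -/
noncomputable def assocStirlingPoly (n : ℕ) : ℕ[X] :=
  ∑ m ∈ range (n + 1), C (assocStirling n m) * X ^ m

theorem coeff_assocStirlingPoly (n k : ℕ) :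
    (assocStirlingPoly n).coeff k = assocStirling n k := by
  simp only [assocStirlingPoly, finsetSum_coeff, coeff_C_mul_X_pow, sum_ite_eq, mem_range,
    ite_eq_left_iff, not_lt]
  exact fun h => (assocStirling_eq_zero (by omega)).symm

theorem assocStirlingPoly_succ (n : ℕ) :
    assocStirlingPoly (n + 1) =
      X * (derivative (assocStirlingPoly n) + (n : ℕ[X]) * assocStirlingPoly (n - 1)) := by
  ext (_ | k)
  · rw [coeff_X_mul_zero, coeff_assocStirlingPoly, assocStirling]
  · rw [coeff_X_mul, coeff_add, coeff_derivative, coeff_natCast_mul, coeff_assocStirlingPoly,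
      coeff_assocStirlingPoly, coeff_assocStirlingPoly, assocStirling, Nat.cast_id, Nat.cast_id,
      mul_comm (k + 1)]

/-- The generating polynomial counting the partitions of an `n`-set without singletons by their
number of marked blocks, where any blocks may be marked. -/
noncomputable def markedPoly (n : ℕ) : ℕ[X] :=
  (assocStirlingPoly n).comp (X + 1)

theorem coeff_markedPoly (n l : ℕ) :
    (markedPoly n).coeff l = ∑ m ∈ Icc l (n / 2), m.choose l * p2 n m := by
  have coeff_eq : (markedPoly n).coeff l = ∑ m ∈ range (n + 1), m.choose l * p2 n m := by
    rw [markedPoly, assocStirlingPoly, Polynomial.sum_comp, finsetSum_coeff]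
    refine sum_congr rfl fun m _ => ?_
    rw [mul_comp, C_comp, pow_comp, X_comp, coeff_C_mul, coeff_X_add_one_pow, Nat.cast_id,
      p2_eq_assocStirling, mul_comm]
  rw [coeff_eq]
  refine (sum_subset (fun m hm => ?_) fun m _ hm => ?_).symm
  · rw [mem_Icc] at hm
    rw [mem_range]
    omega
  · rw [mem_Icc, not_and_or] at hm
    rcases hm with hm | hm
    · rw [Nat.choose_eq_zero_of_lt (by omega), zero_mul]
    · rw [p2_eq_assocStirling, assocStirling_eq_zero (by omega), mul_zero]

theorem markedPoly_succ (n : ℕ) :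
    markedPoly (n + 1) =
      (X + 1) * (derivative (markedPoly n) + (n : ℕ[X]) * markedPoly (n - 1)) := by
  simp only [markedPoly, assocStirlingPoly_succ, derivative_comp, mul_comp, add_comp, X_comp,
    natCast_comp, derivative_add, derivative_X, derivative_one, add_zero, one_mul]

/-- The coefficients of Proposition 3.3. They count the partitions of a `k`-set in which `l`
blocks are marked, all singletons being marked: `m₁` is the number of singletons and `m₂` the
number of other blocks. -/
noncomputable def markedPartitionCount (k l : ℕ) : ℕ :=
  ∑ m₁ ∈ range (l + 1), k.choose m₁ *
    ∑ m₂ ∈ Icc (l - m₁) ((k - m₁) / 2), m₂.choose (l - m₁) * p2 (k - m₁) m₂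

/-- The generating polynomial of the numbers `markedPartitionCount k l`, for fixed `k`. -/
noncomputable def markedPartitionPoly (k : ℕ) : ℕ[X] :=
  ∑ ij ∈ antidiagonal k, (k.choose ij.1 : ℕ[X]) * (X ^ ij.1 * markedPoly ij.2)

theorem coeff_markedPartitionPoly (k l : ℕ) :
    (markedPartitionPoly k).coeff l = markedPartitionCount k l := by
  let term (m : ℕ) : ℕ :=
    k.choose m * if m ≤ l then (markedPoly (k - m)).coeff (l - m) else 0
  calc (markedPartitionPoly k).coeff l
      = ∑ m ∈ range (k + 1), term m := by
        rw [markedPartitionPoly, Nat.sum_antidiagonal_eq_sum_range_succ_mk, finsetSum_coeff]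
        refine sum_congr rfl fun m _ => ?_
        rw [coeff_natCast_mul, coeff_X_pow_mul', Nat.cast_id]
    _ = ∑ m ∈ range (k + l + 1), term m :=
        sum_subset (range_subset_range.2 (by omega)) fun m _ hm => by
          rw [mem_range] at hm
          change k.choose m * _ = 0
          rw [Nat.choose_eq_zero_of_lt (by omega), zero_mul]
    _ = ∑ m ∈ range (l + 1), term m :=
        (sum_subset (range_subset_range.2 (by omega)) fun m _ hm => by
          rw [mem_range] at hm
          change _ * ite _ _ _ = 0
          rw [if_neg (by omega), mul_zero]).symm
    _ = markedPartitionCount k l := sum_congr rfl fun m hm => by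
        change _ * ite _ _ _ = _
        rw [if_pos (by rw [mem_range] at hm; omega), coeff_markedPoly]

theorem sum_antidiagonal_choose_derivative (k : ℕ) (F : ℕ → ℕ[X]) :
    ∑ ij ∈ antidiagonal k, (k.choose ij.1 : ℕ[X]) * (derivative (X ^ ij.1) * F ij.2) =
      ∑ ij ∈ antidiagonal k,
        (k.choose ij.1 : ℕ[X]) * (X ^ ij.1 * ((ij.2 : ℕ[X]) * F (ij.2 - 1))) := by
  obtain _ | n := k
  · simp
  rw [Nat.sum_antidiagonal_succ, Nat.sum_antidiagonal_succ']
  simp only [pow_zero, derivative_one, zero_mul, mul_zero, zero_add, Nat.add_sub_cancel,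
    Nat.cast_zero]
  refine sum_congr rfl fun ij hij => ?_
  have choose_mul : (n + 1).choose (ij.1 + 1) * (ij.1 + 1) =
      (n + 1).choose ij.1 * (ij.2 + 1) := by
    rw [Nat.choose_succ_right_eq, ← mem_antidiagonal.1 hij]
    congr 1
    omega
  rw [derivative_X_pow_succ]
  calc _ = (((n + 1).choose (ij.1 + 1) * (ij.1 + 1) : ℕ) : ℕ[X]) * (X ^ ij.1 * F ij.2) := by
        simp only [Nat.cast_id, eq_natCast, Nat.cast_add, Nat.cast_one, Nat.cast_mul]
        ring
    _ = _ := by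
        rw [choose_mul]
        push_cast
        ring

theorem markedPartitionPoly_succ (k : ℕ) :
    markedPartitionPoly (k + 1) =
      X * markedPartitionPoly k + (X + 1) * derivative (markedPartitionPoly k) := by
  have derivative_eq : derivative (markedPartitionPoly k) =
      ∑ ij ∈ antidiagonal k, (k.choose ij.1 : ℕ[X]) * (X ^ ij.1 *
        (derivative (markedPoly ij.2) + (ij.2 : ℕ[X]) * markedPoly (ij.2 - 1))) := by
    simp only [markedPartitionPoly, derivative_sum, derivative_mul, derivative_natCast, zero_mul,
      zero_add, mul_add, sum_add_distrib]
    rw [sum_antidiagonal_choose_derivative, add_comm]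
  rw [derivative_eq, markedPartitionPoly,
    sum_antidiagonal_choose_succ_mul fun i j => X ^ i * markedPoly j, markedPartitionPoly,
    mul_sum, mul_sum, add_comm]
  congr 1
  · refine sum_congr rfl fun ij hij => ?_
    rw [← Nat.choose_symm_of_eq_add (mem_antidiagonal.1 hij).symm]
    ring
  · refine sum_congr rfl fun ij _ => ?_
    rw [markedPoly_succ]
    ring

theorem markedPartitionCount_succ_zero (k : ℕ) :
    markedPartitionCount (k + 1) 0 = markedPartitionCount k 1 := by
  simp only [← coeff_markedPartitionPoly, markedPartitionPoly_succ, add_mul, one_mul, coeff_add,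
    coeff_X_mul_zero, coeff_derivative, zero_add, Nat.cast_zero, mul_one]

theorem markedPartitionCount_succ_succ (k l : ℕ) :
    markedPartitionCount (k + 1) (l + 1) = markedPartitionCount k l +
      (l + 1) * markedPartitionCount k (l + 1) + (l + 2) * markedPartitionCount k (l + 2) := by
  simp only [← coeff_markedPartitionPoly, markedPartitionPoly_succ, add_mul, one_mul, coeff_add,
    coeff_X_mul, coeff_derivative, Nat.cast_id]
  ring

theorem markedPartitionCount_zero (l : ℕ) :
    markedPartitionCount 0 l = if l = 0 then 1 else 0 := by
  simp only [← coeff_markedPartitionPoly, markedPartitionPoly, Nat.antidiagonal_zero,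
    sum_singleton, Nat.choose_self, Nat.cast_one, pow_zero, markedPoly,
    assocStirlingPoly, zero_add, range_one, assocStirling, map_one, mul_one, one_comp, coeff_one]

theorem markedPartitionCount_eq_zero {k l : ℕ} (h : k < l) : markedPartitionCount k l = 0 := by
  induction k generalizing l with
  | zero => rw [markedPartitionCount_zero, if_neg h.ne']
  | succ k ih =>
    obtain _ | l := l
    · omega
    rw [markedPartitionCount_succ_succ, ih (by omega), ih (by omega), ih (by omega), mul_zero,
      mul_zero, add_zero, add_zero]

end Coefficients

section StableCount

theorem rowLen_rowDiagram_zero (n : ℕ) : (rowDiagram n).rowLen 0 = n :=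
  YoungDiagram.rowLen_ofRowLens (w := [n]) 0

theorem truncate_rowDiagram (n : ℕ) : truncate (rowDiagram n) = ⊥ := by
  ext ⟨i, j⟩
  rw [YoungDiagram.mem_cells, mem_truncate, rowDiagram, YoungDiagram.mem_ofRowLens]
  simp

theorem rowDiagram_card_eq_iff {lam : YoungDiagram} :
    rowDiagram lam.card = lam ↔ truncate lam = ⊥ := by
  rw [eq_iff_truncate_eq, truncate_rowDiagram, rowLen_rowDiagram_zero, eq_comm (a := ⊥)]
  refine and_iff_left_of_imp fun h => ?_
  rw [card_eq_card_truncate_add, card_eq_zero_iff_eq_bot.2 h, zero_add]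

theorem fSYT_mul_add_sum_upperCovers (c : ℕ → ℕ) (α : YoungDiagram) :
    fSYT α * c α.card + ∑ β ∈ upperCovers α, fSYT β * c β.card =
      fSYT α * (c α.card + (α.card + 1) * c (α.card + 1)) := by
  have card_eq : ∀ β ∈ upperCovers α, fSYT β * c β.card = fSYT β * c (α.card + 1) :=
    fun β hβ => by rw [card_eq_of_covBy (mem_upperCovers.1 hβ)]
  rw [sum_congr rfl card_eq, ← sum_mul, sum_fSYT_upperCovers]
  ring

theorem sum_lowerCovers_fSYT_mul (c : ℕ → ℕ) {α : YoungDiagram} {l : ℕ} (h : α.card = l + 1) :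
    ∑ γ ∈ lowerCovers α, fSYT γ * c γ.card = fSYT α * c l := by
  have card_eq : ∀ γ ∈ lowerCovers α, fSYT γ * c γ.card = fSYT γ * c l := fun γ hγ => by
    rw [Nat.succ_injective ((card_eq_of_covBy (mem_lowerCovers.1 hγ)).symm.trans h)]
  have ne_bot : α ≠ ⊥ := by
    rw [Ne, ← card_eq_zero_iff_eq_bot, h]
    exact l.succ_ne_zero
  rw [sum_congr rfl card_eq, ← sum_mul, ← fSYT_eq_sum_lowerCovers ne_bot]

/-- The right-hand side of Proposition 3.3, as a function of the truncation `α` of the final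
shape. -/
noncomputable def stableCount (k : ℕ) (α : YoungDiagram) : ℕ :=
  fSYT α * markedPartitionCount k α.card

theorem stableCount_zero [DecidableEq YoungDiagram] (α : YoungDiagram) :
    stableCount 0 α = if α = ⊥ then 1 else 0 := by
  simp only [stableCount, markedPartitionCount_zero, card_eq_zero_iff_eq_bot]
  split_ifs with h
  · rw [h, fSYT_bot, mul_one]
  · rw [mul_zero]

theorem stableCount_eq_zero {k : ℕ} {α : YoungDiagram} (h : k < α.card) :
    stableCount k α = 0 := by
  rw [stableCount, markedPartitionCount_eq_zero h, mul_zero]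

theorem stableCount_succ (k : ℕ) (α : YoungDiagram) :
    stableCount (k + 1) α + stableCount k α =
      stableCount k α + ∑ β ∈ upperCovers α, stableCount k β +
        ∑ γ ∈ lowerCovers α, (stableCount k γ + ∑ β ∈ upperCovers γ, stableCount k β) := by
  have add_sum_upperCovers := fSYT_mul_add_sum_upperCovers (markedPartitionCount k)
  simp only [stableCount, add_sum_upperCovers]
  obtain h | ⟨l, h⟩ : α.card = 0 ∨ ∃ l, α.card = l + 1 :=
    α.card.eq_zero_or_eq_succ_pred.imp_right fun h => ⟨_, h⟩
  · have lowerCovers_eq : lowerCovers α = ∅ := eq_empty_of_forall_notMem fun γ hγ => by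
      have := card_eq_of_covBy (mem_lowerCovers.1 hγ)
      omega
    rw [lowerCovers_eq, sum_empty, h, markedPartitionCount_succ_zero]
    ring
  · rw [sum_lowerCovers_fSYT_mul
      (fun l => markedPartitionCount k l + (l + 1) * markedPartitionCount k (l + 1)) h,
      h, markedPartitionCount_succ_succ]
    ring

theorem sum_upperCovers_stableCount {k : ℕ} {ν : YoungDiagram}
    (h : k + ν.rowLen 1 ≤ ν.card) :
    ∑ μ ∈ upperCovers ν, stableCount k (truncate μ) =
      stableCount k (truncate ν) + ∑ β ∈ upperCovers (truncate ν), stableCount k β := by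
  refine sum_upperCovers_truncate fun β hβ hrow => stableCount_eq_zero ?_
  rw [mem_upperCovers] at hβ
  have := rowLen_le_of_covBy hβ 0
  rw [rowLen_truncate, zero_add] at this
  have := card_eq_of_covBy hβ
  have := card_eq_card_truncate_add ν
  omega

theorem sum_lowerCovers_upperCovers_stableCount {k : ℕ} {lam : YoungDiagram}
    (h : k + 1 + lam.rowLen 1 ≤ lam.card) :
    ∑ ν ∈ lowerCovers lam, ∑ μ ∈ upperCovers ν, stableCount k (truncate μ) =
      stableCount (k + 1) (truncate lam) + stableCount k (truncate lam) := by
  rw [stableCount_succ, ← sum_lowerCovers_truncate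
    (F := fun α => stableCount k α + ∑ β ∈ upperCovers α, stableCount k β)]
  · refine sum_congr rfl fun ν hν => sum_upperCovers_stableCount ?_
    rw [mem_lowerCovers] at hν
    have := card_eq_of_covBy hν
    have : ν.rowLen 1 ≤ lam.rowLen 1 := le_iff_rowLen_le.1 hν.le 1
    omega
  · intro heq
    have k_lt : k < (truncate lam).card := by
      have := card_eq_card_truncate_add lam
      omega
    rw [stableCount_eq_zero k_lt, zero_add]
    refine sum_eq_zero fun β hβ => stableCount_eq_zero ?_
    have := card_eq_of_covBy (mem_upperCovers.1 hβ)
    omega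

theorem card_kroneckerTableau_rowDiagram {n k : ℕ} {lam : YoungDiagram} (hcard : lam.card = n)
    (h : k + lam.rowLen 1 ≤ n) :
    Nat.card (KroneckerTableau k (rowDiagram n) lam) = stableCount k (truncate lam) := by
  induction k generalizing lam with
  | zero =>
    classical
    subst hcard
    simp only [KroneckerTableau.card_zero, stableCount_zero, rowDiagram_card_eq_iff]
  | succ k ih =>
    have ne_bot : lam ≠ ⊥ := mt card_eq_zero_iff_eq_bot.2 (by omega)
    refine Nat.add_right_cancel (m := stableCount k (truncate lam)) ?_
    rw [← sum_lowerCovers_upperCovers_stableCount (hcard ▸ h), ← ih hcard (by omega),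
      KroneckerTableau.card_succ ne_bot]
    refine sum_congr rfl fun ν hν => sum_congr rfl fun μ hμ => ?_
    rw [mem_lowerCovers] at hν
    rw [mem_upperCovers] at hμ
    have := card_eq_of_covBy hν
    have := card_eq_of_covBy hμ
    have : ν.rowLen 1 ≤ lam.rowLen 1 := le_iff_rowLen_le.1 hν.le 1
    have := rowLen_le_of_covBy hμ 1
    exact ih (by omega) (by omega)

end StableCount

/-- Proposition 3.3: for `n ≥ k + λ₂` and `ℓ = n - λ₁`, the number of Kronecker tableaux of
length `k`, initial shape `(n)` and final shape `λ` is
`f^{λ̄} ⬝ Σ_{m₁=0}^{ℓ} C(k, m₁) Σ_{m₂=ℓ-m₁}^{⌊(k-m₁)/2⌋} C(m₂, ℓ-m₁) p₂(k-m₁, m₂)`. -/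
theorem statement3 (n k ℓ : ℕ) (hn : 1 ≤ n) (hk : 1 ≤ k) (lam : YoungDiagram)
    (hcard : lam.card = n) (hstable : k + lam.rowLen 1 ≤ n) (hℓ : ℓ = n - lam.rowLen 0) :
    Nat.card (KroneckerTableau k (rowDiagram n) lam) =
      fSYT (truncate lam) *
        ∑ m₁ ∈ Finset.range (ℓ + 1), k.choose m₁ *
          ∑ m₂ ∈ Finset.Icc (ℓ - m₁) ((k - m₁) / 2),
            m₂.choose (ℓ - m₁) * p2 (k - m₁) m₂ := by
  have card_truncate : (truncate lam).card = ℓ := by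
    have := card_eq_card_truncate_add lam
    omega
  rw [card_kroneckerTableau_rowDiagram hcard hstable, stableCount, markedPartitionCount,
    card_truncate]

end KroneckerPaper
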